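/- arXiv:0711.4187 — 4 statements merged into one kernel-verified Lean document; each statement's English description precedes it below -/
import Mathlib

section
/- Let X and Y be Banach spaces, U an open subset of X, and f : U → Y a continuously (Fréchet) differentiable map. Let x₀ ∈ U and set D := Df(x₀). Suppose D is surjective and admits a bounded linear right inverse Q : Y → X (i.e. D ∘ Q = id_Y) with ‖Q‖ ≤ C for some constant C > 0. Suppose further that h > 0 is such that the closed ball B̄(x₀,h) is contained in U and that ‖Df(x) − D‖ ≤ 1/(2C) in operator norm for every x ∈ B̄(x₀,h). If ‖f(x₀)‖ ≤ h/(4C), then there exists a unique x ∈ B̄(x₀,h) satisfying: f(x) = 0 and x − x₀ belongs to the image of Q; moreover this x satisfies ‖x − x₀‖ ≤ 2C‖f(x₀)‖. -/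
/-!
Points of the affine slice `x₀ + Im Q` are parametrised as `x₀ + Q y` with `y : Y`, and
`y ↦ y - f (x₀ + Q y)` is the simplified Newton iteration read in `Y`: its fixed points are the
zeros of `f` on the slice. The mean value inequality applied to `f - D`, together with `D ∘ Q = id`
and `‖Q‖ ≤ C`, makes it a `1/2`-contraction as long as `x₀ + Q y` stays in the ball
(`norm_newton_sub_le`). It preserves the closed ball of radius `2 ‖f x₀‖` about `0` in `Y`, which
`Q` maps into the ball of radius `2 C ‖f x₀‖ ≤ h / 2`, so the contraction principle gives
existence and the norm bound. The same estimate gives uniqueness on the whole ball of radius `h`.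
-/

/-- The contraction estimate for the simplified Newton map `y ↦ y - f (x₀ + Q y)`. -/
lemma norm_newton_sub_le
    {X Y : Type*} [NormedAddCommGroup X] [NormedSpace ℝ X]
    [NormedAddCommGroup Y] [NormedSpace ℝ Y]
    {f : X → Y} {f' : X → X →L[ℝ] Y} {x₀ : X} {D : X →L[ℝ] Y} {Q : Y →L[ℝ] X} {C h : ℝ}
    (hf : ∀ x ∈ Metric.closedBall x₀ h, HasFDerivAt f (f' x) x)
    (hQ : D.comp Q = ContinuousLinearMap.id ℝ Y) (hC : 0 < C) (hQnorm : ‖Q‖ ≤ C)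
    (hD : ∀ x ∈ Metric.closedBall x₀ h, ‖f' x - D‖ ≤ 1 / (2 * C))
    {y z : Y} (hy : x₀ + Q y ∈ Metric.closedBall x₀ h) (hz : x₀ + Q z ∈ Metric.closedBall x₀ h) :
    ‖(y - f (x₀ + Q y)) - (z - f (x₀ + Q z))‖ ≤ 1 / 2 * ‖y - z‖ := by
  have hDQ : ∀ w, D (Q w) = w := fun w => DFunLike.congr_fun hQ w
  have hmv := (convex_closedBall x₀ h).norm_image_sub_le_of_norm_hasFDerivWithin_le'
    (fun x hx => (hf x hx).hasFDerivWithinAt) hD hz hy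
  have hsub : x₀ + Q y - (x₀ + Q z) = Q (y - z) := by rw [map_sub]; abel
  rw [hsub, hDQ] at hmv
  calc ‖(y - f (x₀ + Q y)) - (z - f (x₀ + Q z))‖
      = ‖f (x₀ + Q y) - f (x₀ + Q z) - (y - z)‖ := by rw [← norm_neg]; congr 1; abel
    _ ≤ 1 / (2 * C) * ‖Q (y - z)‖ := hmv
    _ ≤ 1 / (2 * C) * (C * ‖y - z‖) := by
        gcongr
        exact Q.le_of_opNorm_le hQnorm _
    _ = 1 / 2 * ‖y - z‖ := by field_simp


/-- Abstract implicit function theorem (Newton–Picard): if `f` is C¹ on an open set `U`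
containing the closed ball of radius `h` around `x₀`, `D = Df(x₀)` is surjective with a
bounded right inverse `Q` of norm at most `C`, `‖Df(x) - D‖ ≤ 1/(2C)` on the ball and
`‖f(x₀)‖ ≤ h/(4C)`, then there is a unique zero `x` of `f` in the ball with
`x - x₀ ∈ Im Q`, and it satisfies `‖x - x₀‖ ≤ 2C‖f(x₀)‖`. -/
theorem stmt_0
    {X Y : Type*} [NormedAddCommGroup X] [NormedSpace ℝ X] [CompleteSpace X]
    [NormedAddCommGroup Y] [NormedSpace ℝ Y] [CompleteSpace Y]
    (U : Set X) (hU : IsOpen U) (f : X → Y) (f' : X → X →L[ℝ] Y)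
    (hf : ∀ x ∈ U, HasFDerivAt f (f' x) x) (hf'cont : ContinuousOn f' U)
    (x₀ : X) (hx₀ : x₀ ∈ U)
    (hsurj : Function.Surjective (f' x₀))
    (Q : Y →L[ℝ] X) (hQ : (f' x₀).comp Q = ContinuousLinearMap.id ℝ Y)
    (C : ℝ) (hC : 0 < C) (hQnorm : ‖Q‖ ≤ C)
    (h : ℝ) (hh : 0 < h) (hball : Metric.closedBall x₀ h ⊆ U)
    (hD : ∀ x ∈ Metric.closedBall x₀ h, ‖f' x - f' x₀‖ ≤ 1 / (2 * C))
    (hsmall : ‖f x₀‖ ≤ h / (4 * C)) :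
    ∃ x, (x ∈ Metric.closedBall x₀ h ∧ f x = 0 ∧ x - x₀ ∈ Set.range Q) ∧
      ‖x - x₀‖ ≤ 2 * C * ‖f x₀‖ ∧
      ∀ y, y ∈ Metric.closedBall x₀ h → f y = 0 → y - x₀ ∈ Set.range Q → y = x := by
  have hcontr := fun {y z : Y} => norm_newton_sub_le (y := y) (z := z)
    (fun x hx => hf x (hball hx)) hQ hC hQnorm hD
  set T : Y → Y := fun y => y - f (x₀ + Q y) with hT
  set s : Set Y := Metric.closedBall 0 (2 * ‖f x₀‖) with hs
  have hnorm : ∀ y ∈ s, ‖Q y‖ ≤ 2 * C * ‖f x₀‖ := fun y hy => by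
    have h1 : ‖y‖ ≤ 2 * ‖f x₀‖ := by simpa [hs] using hy
    calc ‖Q y‖ ≤ C * ‖y‖ := Q.le_of_opNorm_le hQnorm y
      _ ≤ C * (2 * ‖f x₀‖) := by gcongr
      _ = 2 * C * ‖f x₀‖ := by ring
  have hmem : ∀ y ∈ s, x₀ + Q y ∈ Metric.closedBall x₀ h := fun y hy => by
    have h1 : ‖f x₀‖ * (4 * C) ≤ h := (le_div_iff₀ (by positivity)).1 hsmall
    rw [mem_closedBall_iff_norm, add_sub_cancel_left]
    linarith [hnorm y hy]
  have h0 : (0 : Y) ∈ s := by simp [hs]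
  have hmaps : Set.MapsTo T s s := fun y hy => by
    have h1 : ‖y‖ ≤ 2 * ‖f x₀‖ := by simpa [hs] using hy
    have h2 : ‖T y - T 0‖ ≤ 1 / 2 * ‖y‖ := by
      simpa only [sub_zero] using hcontr (hmem y hy) (hmem 0 h0)
    have h3 : ‖T 0‖ = ‖f x₀‖ := by simp [hT]
    have h4 : ‖T y‖ ≤ ‖T y - T 0‖ + ‖T 0‖ := norm_le_norm_sub_add _ _
    rw [hs, mem_closedBall_zero_iff]
    linarith
  have hK : ContractingWith (1 / 2) (hmaps.restrict T s s) := by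
    refine ⟨by rw [← NNReal.coe_lt_coe]; norm_num, LipschitzWith.of_dist_le_mul fun y z => ?_⟩
    simpa [Subtype.dist_eq, dist_eq_norm] using hcontr (hmem y y.2) (hmem z z.2)
  obtain ⟨y, hys, hfix, -, -⟩ :=
    hK.exists_fixedPoint' Metric.isClosed_closedBall.isComplete hmaps h0 (edist_ne_top _ _)
  have hzero : f (x₀ + Q y) = 0 := sub_eq_self.1 hfix
  refine ⟨x₀ + Q y, ⟨hmem y hys, hzero, y, by simp⟩, by simpa using hnorm y hys, ?_⟩
  rintro x hx hfx ⟨z, hz⟩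
  obtain rfl : x = x₀ + Q z := by rw [hz]; abel
  have h1 := hcontr hx (hmem y hys)
  rw [hfx, hzero, sub_zero, sub_zero] at h1
  have h2 : z = y := by
    rw [← sub_eq_zero, ← norm_le_zero_iff]
    linarith
  rw [h2]
end

section
/- Let n ≥ 1, let A, B, a ∈ ℂⁿ with A ≠ 0 and B ≠ 0, define the local model u₀ : ℝ × ℝ → ℂⁿ by u₀(τ,t) = e^{2π(τ+it)}·A + e^{−2π(τ+it)}·B + τ·a, and set R(ε) = −(ln ε)/(4π). Then there exist β > 0 and ε₁ ∈ (0,1) such that for all ε ∈ (0, ε₁) and all (τ,t) with (2/3)·R(ε) ≤ |τ| ≤ R(ε) + 1: ‖ε·u₀(τ,t)‖ ≥ β·ε^{2/3}. -/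
/-!
On the half `τ ≥ 0` the term `e^{2π(τ+it)} A` has norm `e^{2πτ} ‖A‖` and dominates the bounded term
in `B` and the linear term in `a`, so `‖u₀(τ,t)‖ ≥ (‖A‖/2) e^{2πτ}` once `τ` is large
(`eventually_le_norm_localModel`). The substitution `(τ,t) ↦ (-τ,-t)` exchanges `A` and `B`
(`localModel_swap`) and so handles `τ ≤ 0`. Finally `|τ| ≥ (2/3) R(ε)` says exactly that
`e^{2π|τ|} ≥ ε^{-1/3}`, and it forces `|τ|` to be large when `ε` is small.
-/

/-- The local model `u₀(τ,t) = e^{2π(τ+it)}A + e^{-2π(τ+it)}B + τa`. -/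
noncomputable def localModel (n : ℕ) (A B a : EuclideanSpace ℂ (Fin n)) (τ t : ℝ) :
    EuclideanSpace ℂ (Fin n) :=
  Complex.exp (2 * (Real.pi : ℂ) * ((τ : ℂ) + (t : ℂ) * Complex.I)) • A +
    Complex.exp (-(2 * (Real.pi : ℂ) * ((τ : ℂ) + (t : ℂ) * Complex.I))) • B +
    (τ : ℂ) • a

/-- `R(ε) = -(ln ε)/(4π)`. -/
noncomputable def Rfun (ε : ℝ) : ℝ := -(Real.log ε) / (4 * Real.pi)

lemma localModel_swap (n : ℕ) (A B a : EuclideanSpace ℂ (Fin n)) (τ t : ℝ) :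
    localModel n A B a τ t = localModel n B A (-a) (-τ) (-t) := by
  have h : 2 * (Real.pi : ℂ) * (((-τ : ℝ) : ℂ) + ((-t : ℝ) : ℂ) * Complex.I)
      = -(2 * (Real.pi : ℂ) * ((τ : ℂ) + (t : ℂ) * Complex.I)) := by
    push_cast; ring
  unfold localModel
  rw [h]
  simp only [neg_neg, Complex.ofReal_neg, smul_neg, neg_smul]
  rw [add_comm (Complex.exp (2 * (Real.pi : ℂ) * ((τ : ℂ) + (t : ℂ) * Complex.I)) • A)]

/-- The threshold on `s` is uniform in `t`, because `t` enters only through unit-modulus factors. -/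
lemma eventually_le_norm_localModel (n : ℕ) (A B a : EuclideanSpace ℂ (Fin n)) (hA : A ≠ 0) :
    ∀ᶠ s : ℝ in Filter.atTop, ∀ t : ℝ,
      ‖A‖ / 2 * Real.exp (2 * Real.pi * s) ≤ ‖localModel n A B a s t‖ := by
  have hA' : 0 < ‖A‖ := norm_pos_iff.mpr hA
  have h2π : 0 < 2 * Real.pi := by positivity
  have ho : (fun s : ℝ => ‖B‖ * s ^ 0 + ‖a‖ * s ^ 1) =o[Filter.atTop]
      fun s => Real.exp (2 * Real.pi * s) :=
    ((isLittleO_pow_exp_pos_mul_atTop 0 h2π).const_mul_left _).add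
      ((isLittleO_pow_exp_pos_mul_atTop 1 h2π).const_mul_left _)
  filter_upwards [ho.def (half_pos hA'), Filter.eventually_ge_atTop 0] with s hs hs0 t
  have hs' : ‖B‖ + ‖a‖ * s ≤ ‖A‖ / 2 * Real.exp (2 * Real.pi * s) := by
    simpa using (le_abs_self _).trans hs
  have nA : ‖Complex.exp (2 * (Real.pi : ℂ) * ((s : ℂ) + (t : ℂ) * Complex.I)) • A‖
      = Real.exp (2 * Real.pi * s) * ‖A‖ := by
    rw [norm_smul, Complex.norm_exp]; simp
  have nB : ‖Complex.exp (-(2 * (Real.pi : ℂ) * ((s : ℂ) + (t : ℂ) * Complex.I))) • B‖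
      ≤ ‖B‖ := by
    rw [norm_smul, Complex.norm_exp]
    refine mul_le_of_le_one_left (norm_nonneg _) (Real.exp_le_one_iff.mpr ?_)
    simpa using by positivity
  have na : ‖(s : ℂ) • a‖ = s * ‖a‖ := by
    rw [norm_smul, Complex.norm_real, Real.norm_of_nonneg hs0]
  have key : ‖Complex.exp (2 * (Real.pi : ℂ) * ((s : ℂ) + (t : ℂ) * Complex.I)) • A‖
      ≤ ‖localModel n A B a s t‖ +
        ‖Complex.exp (-(2 * (Real.pi : ℂ) * ((s : ℂ) + (t : ℂ) * Complex.I))) • B‖ +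
        ‖(s : ℂ) • a‖ := by
    refine le_trans (le_of_eq ?_) ((norm_sub_le _ _).trans (add_le_add_left (norm_sub_le _ _) _))
    congr 1
    unfold localModel
    abel
  linarith

/-- On the transition region `(2/3)R(ε) ≤ |τ| ≤ R(ε)+1` the scaled local model stays
at distance at least `β ε^{2/3}` from the origin. -/
theorem stmt_7 (n : ℕ) (hn : 1 ≤ n) (A B a : EuclideanSpace ℂ (Fin n))
    (hA : A ≠ 0) (hB : B ≠ 0) :
    ∃ β > (0 : ℝ), ∃ ε₁ ∈ Set.Ioo (0 : ℝ) 1,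
      ∀ ε ∈ Set.Ioo (0 : ℝ) ε₁, ∀ τ t : ℝ,
        (2 / 3) * Rfun ε ≤ |τ| → |τ| ≤ Rfun ε + 1 →
        β * ε ^ ((2 : ℝ) / 3) ≤ ‖(ε : ℂ) • localModel n A B a τ t‖ := by
  obtain ⟨T, hT⟩ := Filter.eventually_atTop.mp
    ((eventually_le_norm_localModel n A B a hA).and (eventually_le_norm_localModel n B A (-a) hB))
  have hπ := Real.pi_pos
  have hA' : 0 < ‖A‖ := norm_pos_iff.mpr hA
  have hB' : 0 < ‖B‖ := norm_pos_iff.mpr hB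
  -- For `ε < exp (-6π max(T, 1))`, one has `(2/3) R(ε) = -(log ε) / (6π) ≥ T`.
  refine ⟨min (‖A‖ / 2) (‖B‖ / 2), by positivity, Real.exp (-(6 * Real.pi * max T 1)),
    ⟨Real.exp_pos _, Real.exp_lt_one_iff.mpr (neg_lt_zero.mpr (by positivity))⟩, ?_⟩
  rintro ε ⟨hε, hε1⟩ τ t hτ -
  have hR : 2 / 3 * Rfun ε * (6 * Real.pi) = -Real.log ε := by
    unfold Rfun; field_simp; ring
  have hlog : Real.log ε < -(6 * Real.pi * max T 1) := (Real.log_lt_iff_lt_exp hε).mpr hε1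
  have hTτ : T ≤ |τ| := by
    refine (le_max_left T 1).trans (le_trans ?_ hτ)
    refine le_of_mul_le_mul_right ?_ (by positivity : 0 < 6 * Real.pi)
    linarith
  have hexp : ε ^ ((2 : ℝ) / 3) ≤ ε * Real.exp (2 * Real.pi * |τ|) := by
    rw [Real.rpow_def_of_pos hε]
    nth_rewrite 2 [← Real.exp_log hε]
    rw [← Real.exp_add]
    refine Real.exp_le_exp.mpr ?_
    have := mul_le_mul_of_nonneg_right hτ (by positivity : 0 ≤ 6 * Real.pi)
    linarith
  have hu : min (‖A‖ / 2) (‖B‖ / 2) * Real.exp (2 * Real.pi * |τ|)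
      ≤ ‖localModel n A B a τ t‖ := by
    obtain ⟨h1, h2⟩ := hT |τ| hTτ
    rcases le_total 0 τ with h | h
    · rw [abs_of_nonneg h] at h1 ⊢
      exact (mul_le_mul_of_nonneg_right (min_le_left _ _) (Real.exp_pos _).le).trans (h1 t)
    · rw [abs_of_nonpos h] at h2 ⊢
      rw [localModel_swap]
      exact (mul_le_mul_of_nonneg_right (min_le_right _ _) (Real.exp_pos _).le).trans (h2 (-t))
  rw [norm_smul, Complex.norm_real, Real.norm_of_nonneg hε.le]
  calc min (‖A‖ / 2) (‖B‖ / 2) * ε ^ ((2 : ℝ) / 3)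
      ≤ min (‖A‖ / 2) (‖B‖ / 2) * (ε * Real.exp (2 * Real.pi * |τ|)) :=
        mul_le_mul_of_nonneg_left hexp (by positivity)
    _ = ε * (min (‖A‖ / 2) (‖B‖ / 2) * Real.exp (2 * Real.pi * |τ|)) := by ring
    _ ≤ ε * ‖localModel n A B a τ t‖ := mul_le_mul_of_nonneg_left hu hε.le
end

section
/- Let n ≥ 1, let u₀ : ℝ × ℝ → ℂⁿ be a map, let a ∈ ℂⁿ, and suppose there are constants c > 0 and T ≥ 0 such that ‖u₀(τ,t)‖ ≥ c·e^{2π|τ|} for all t ∈ ℝ and all τ with |τ| ≥ T. Define u(τ,t) = u₀(τ,t) + τ·a. Then there exist C > 0 and T' ≥ T such that for all τ with |τ| ≥ T' and all t ∈ ℝ: u(τ,t) ≠ 0, ‖ u(τ,t)/‖u(τ,t)‖ − u₀(τ,t)/‖u₀(τ,t)‖ ‖ ≤ C·(1+|τ|)·e^{−2π|τ|}, and |log‖u(τ,t)‖ − log‖u₀(τ,t)‖| ≤ C·(1+|τ|)·e^{−2π|τ|}. -/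
/-!
Write `w = u₀ τ t`, `d = τ • a`. Normalization and `log ‖·‖` are Lipschitz with constant `O(1/‖w‖)`
near a nonzero vector `w`: if `‖d‖ ≤ ‖w‖ / 2`, both change by at most `2‖d‖ / ‖w‖` when `w` is
replaced by `w + d` (`norm_normalize_add_sub_le`, `abs_log_norm_add_sub_le`). The growth bound gives
`‖d‖ / ‖w‖ ≤ (‖a‖ / c) |τ| e^{-2π|τ|}`, and `‖d‖ ≤ ‖w‖ / 2` holds for `|τ| ≥ 4‖a‖ / c` because
`e^{2π|τ|} ≥ τ² / 2`.
-/

theorem norm_normalize_add_sub_le {E : Type*} [NormedAddCommGroup E] [NormedSpace ℝ E]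
    (w d : E) (hw : 0 < ‖w‖) (hwd : 0 < ‖w + d‖) :
    ‖‖w + d‖⁻¹ • (w + d) - ‖w‖⁻¹ • w‖ ≤ 2 * (‖d‖ / ‖w‖) := by
  have hdiff : |‖w‖ - ‖w + d‖| ≤ ‖d‖ := by
    simpa using abs_norm_sub_norm_le w (w + d)
  -- Move `w` to `w + d` at the fixed scale `‖w‖⁻¹`, then change the scale.
  have hsplit : ‖w + d‖⁻¹ • (w + d) - ‖w‖⁻¹ • w
      = ‖w‖⁻¹ • d + (‖w + d‖⁻¹ - ‖w‖⁻¹) • (w + d) := by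
    module
  have h1 : ‖‖w‖⁻¹ • d‖ = ‖d‖ / ‖w‖ := by
    rw [norm_smul, norm_inv, norm_norm]
    ring
  have h2 : ‖(‖w + d‖⁻¹ - ‖w‖⁻¹) • (w + d)‖ = |‖w‖ - ‖w + d‖| / ‖w‖ := by
    rw [norm_smul, Real.norm_eq_abs, inv_sub_inv hwd.ne' hw.ne', abs_div, abs_mul, abs_norm,
      abs_norm]
    field_simp
  rw [hsplit]
  calc _ ≤ ‖‖w‖⁻¹ • d‖ + ‖(‖w + d‖⁻¹ - ‖w‖⁻¹) • (w + d)‖ := norm_add_le _ _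
    _ = ‖d‖ / ‖w‖ + |‖w‖ - ‖w + d‖| / ‖w‖ := by rw [h1, h2]
    _ ≤ ‖d‖ / ‖w‖ + ‖d‖ / ‖w‖ := by gcongr
    _ = _ := by ring

theorem abs_log_norm_add_sub_le {E : Type*} [NormedAddCommGroup E]
    (w d : E) (hw : 0 < ‖w‖) (hd : ‖d‖ ≤ ‖w‖ / 2) :
    |Real.log ‖w + d‖ - Real.log ‖w‖| ≤ 2 * (‖d‖ / ‖w‖) := by
  have hdiff : |‖w‖ - ‖w + d‖| ≤ ‖d‖ := by
    simpa using abs_norm_sub_norm_le w (w + d)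
  obtain ⟨hlo, hhi⟩ := abs_le.mp hdiff
  have hwd : 0 < ‖w + d‖ := by linarith
  have h0 : 0 ≤ ‖d‖ / ‖w‖ := by positivity
  -- Both signs follow from `log x ≤ x - 1`, applied to the ratio of the norms and its inverse.
  have hup : Real.log ‖w + d‖ - Real.log ‖w‖ ≤ ‖d‖ / ‖w‖ := by
    rw [← Real.log_div hwd.ne' hw.ne']
    refine (Real.log_le_sub_one_of_pos (by positivity)).trans ?_
    rw [div_sub_one hw.ne']
    gcongr
    linarith
  have hdown : Real.log ‖w‖ - Real.log ‖w + d‖ ≤ 2 * (‖d‖ / ‖w‖) := by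
    rw [← Real.log_div hw.ne' hwd.ne']
    refine (Real.log_le_sub_one_of_pos (by positivity)).trans ?_
    rw [div_sub_one hwd.ne', ← mul_div_assoc, div_le_div_iff₀ hwd hw]
    nlinarith [norm_nonneg d]
  rw [abs_le]
  constructor <;> linarith


/-- Adding the linear drift `τ·a` to a map growing like `e^{2π|τ|}` changes its angular
component `Θ = w/‖w‖` and radial component `s = log‖w‖` only by `O((1+|τ|)e^{-2π|τ|})`. -/
theorem stmt_12 (n : ℕ) (hn : 1 ≤ n)
    (u₀ : ℝ → ℝ → EuclideanSpace ℂ (Fin n)) (a : EuclideanSpace ℂ (Fin n))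
    (c : ℝ) (hc : 0 < c) (T : ℝ) (hT : 0 ≤ T)
    (hgrowth : ∀ τ t : ℝ, T ≤ |τ| →
      c * Real.exp (2 * Real.pi * |τ|) ≤ ‖u₀ τ t‖) :
    ∃ C > (0 : ℝ), ∃ T' : ℝ, T ≤ T' ∧
      ∀ τ t : ℝ, T' ≤ |τ| →
        u₀ τ t + (τ : ℂ) • a ≠ 0 ∧
        ‖‖u₀ τ t + (τ : ℂ) • a‖⁻¹ • (u₀ τ t + (τ : ℂ) • a) -
            ‖u₀ τ t‖⁻¹ • u₀ τ t‖ ≤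
          C * (1 + |τ|) * Real.exp (-(2 * Real.pi * |τ|)) ∧
        |Real.log ‖u₀ τ t + (τ : ℂ) • a‖ - Real.log ‖u₀ τ t‖| ≤
          C * (1 + |τ|) * Real.exp (-(2 * Real.pi * |τ|)) := by
  have ha := norm_nonneg a
  refine ⟨2 * ‖a‖ / c + 1, by positivity, max T (4 * ‖a‖ / c), le_max_left _ _, ?_⟩
  intro τ t hτ
  have hg := hgrowth τ t ((le_max_left _ _).trans hτ)
  have hτa : 4 * ‖a‖ ≤ |τ| * c := (div_le_iff₀ hc).mp ((le_max_right _ _).trans hτ)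
  have hτ0 := abs_nonneg τ
  have hexp : |τ| ^ 2 / 2 ≤ Real.exp (2 * Real.pi * |τ|) := by
    have hle : |τ| ≤ 2 * Real.pi * |τ| := by nlinarith [Real.pi_gt_three]
    have hq := Real.quadratic_le_exp_of_nonneg (hτ0.trans hle)
    have hsq := pow_le_pow_left₀ hτ0 hle 2
    linarith
  have hE := Real.exp_pos (2 * Real.pi * |τ|)
  have hw : 0 < ‖u₀ τ t‖ := (mul_pos hc hE).trans_le hg
  have hnd : ‖(τ : ℂ) • a‖ = |τ| * ‖a‖ := by
    rw [norm_smul, Complex.norm_real, Real.norm_eq_abs]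
  have hd : ‖(τ : ℂ) • a‖ ≤ ‖u₀ τ t‖ / 2 := by
    rw [hnd]
    have h1 := mul_le_mul_of_nonneg_left hτa hτ0
    have h2 := mul_le_mul_of_nonneg_left hexp hc.le
    linarith
  have hwd : 0 < ‖u₀ τ t + (τ : ℂ) • a‖ := by
    have := norm_sub_le_norm_add (u₀ τ t) ((τ : ℂ) • a)
    linarith
  have hfin : 2 * (‖(τ : ℂ) • a‖ / ‖u₀ τ t‖) ≤
      (2 * ‖a‖ / c + 1) * (1 + |τ|) * Real.exp (-(2 * Real.pi * |τ|)) := by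
    calc 2 * (‖(τ : ℂ) • a‖ / ‖u₀ τ t‖)
        ≤ 2 * (|τ| * ‖a‖ / (c * Real.exp (2 * Real.pi * |τ|))) := by
          rw [hnd]
          gcongr
      _ = 2 * ‖a‖ / c * |τ| * Real.exp (-(2 * Real.pi * |τ|)) := by
          rw [Real.exp_neg]
          field_simp
      _ ≤ _ := by
          gcongr <;> linarith
  exact ⟨norm_pos_iff.mp hwd, (norm_normalize_add_sub_le _ _ hw hwd).trans hfin,
    (abs_log_norm_add_sub_le _ _ hw hd).trans hfin⟩
end

section
/- Let n ≥ 1 and let A, B, a ∈ ℂⁿ with A ≠ 0 and B ≠ 0. Suppose u : ℝ × ℝ → ℂⁿ is a continuously differentiable map, 1-periodic in the second variable t, satisfying the inhomogeneous Cauchy–Riemann equation ∂u/∂τ + i·∂u/∂t = a on ℝ², together with the asymptotic conditions: e^{−2πτ}·(u(τ,t) − τ·a) → e^{2πit}·A uniformly in t as τ → +∞, e^{2πτ}·(u(τ,t) − τ·a) → e^{−2πit}·B uniformly in t as τ → −∞, and the normalization ∫₀¹ u(0,t) dt = 0. Then u(τ,t) = e^{2π(τ+it)}·A + e^{−2π(τ+it)}·B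 + τ·a for all (τ,t). In particular such a map u is unique. -/
/-!
Subtracting the expected solution from `u` leaves a remainder `g` which, as a function of
`s = τ + it`, is entire with period `i` and satisfies `g(s) = o(e^{2π|Re s|})` at both ends of the
cylinder. Instead of a Laurent expansion in `z = e^{2πs}`, the proof uses its coefficients, the
integrals `∫₀¹ e^{-2πk(τ+it)} g(τ+it) dt` for `k ∈ ℤ`. By Cauchy's theorem on a rectangle of
height `1` these do not depend on `τ` (`laurentCoeff_eq`). For `k ≥ 1` they tend to `0` as
`τ → +∞`, for `k ≤ -1` as `τ → -∞`, and for `k = 0` they vanish by the normalization at `τ = 0`.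
So every Fourier coefficient of the continuous loop `t ↦ g(τ+it)` is zero, and `g = 0`
(`eq_zero_of_growth`).
-/

open Complex Filter in
/-- The `k`-th Laurent coefficient of `g`, regarded as a function of `z = e^{2πs}`, computed on the
circle `|z| = e^{2πτ}`. -/
noncomputable def laurentCoeff (g : ℂ → ℂ) (k : ℤ) (τ : ℝ) : ℂ :=
  ∫ t in (0:ℝ)..1, exp (-(2 * (Real.pi : ℂ) * k * (τ + t * I))) * g (τ + t * I)

open Complex Filter in
lemma laurentCoeff_eq {g : ℂ → ℂ} (hg : Differentiable ℂ g) (hper : ∀ s, g (s + I) = g s)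
    (k : ℤ) (σ τ : ℝ) : laurentCoeff g k σ = laurentCoeff g k τ := by
  set F : ℂ → ℂ := fun s => exp (-(2 * (Real.pi : ℂ) * k * s)) * g s with hF
  have hFd : Differentiable ℂ F := by fun_prop
  have hFper : ∀ s, F (s + I) = F s := by
    intro s
    simp only [hF, hper]
    congr 1
    have : -(2 * (Real.pi : ℂ) * k * (s + I)) =
        -(2 * (Real.pi : ℂ) * k * s) + ((-k : ℤ) : ℂ) * (2 * Real.pi * I) := by
      push_cast; ring
    rw [this, exp_add, exp_int_mul_two_pi_mul_I, mul_one]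
  have h := integral_boundary_rect_eq_zero_of_differentiableOn F (σ : ℂ) (τ + I)
    hFd.differentiableOn
  have hsides : ∀ x : ℝ, F (x + ((τ + I : ℂ).im : ℝ) * I) = F (x + ((σ : ℂ).im : ℝ) * I) := by
    intro x
    simp [hFper]
  simp only [hsides, sub_self, zero_add] at h
  rw [← smul_sub, smul_eq_zero, sub_eq_zero] at h
  have h' := h.resolve_left I_ne_zero
  simp only [add_re, ofReal_re, I_re, add_zero, add_im, ofReal_im, I_im, zero_add] at h'
  exact h'.symm

open Complex Filter in
lemma norm_laurentCoeff_le {g : ℂ → ℂ} {k : ℤ} {τ C : ℝ}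
    (h : ∀ t : ℝ, ‖g (τ + t * I)‖ ≤ C * Real.exp (2 * Real.pi * k * τ)) :
    ‖laurentCoeff g k τ‖ ≤ C := by
  have := intervalIntegral.norm_integral_le_of_norm_le_const (a := (0:ℝ)) (b := 1) (C := C)
    (f := fun t : ℝ => exp (-(2 * (Real.pi : ℂ) * k * (τ + t * I))) * g (τ + t * I)) (by
      intro t _
      rw [norm_mul, norm_exp]
      have hre : (-(2 * (Real.pi : ℂ) * k * (τ + t * I))).re = -(2 * Real.pi * k * τ) := by
        simp
      rw [hre, Real.exp_neg, inv_mul_le_iff₀ (Real.exp_pos _), mul_comm (Real.exp _)]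
      exact h t)
  simpa [laurentCoeff] using this

open Complex Filter in
/-- An entire function of period `i` which is `o(e^{2π|Re s|})` as `Re s → ±∞` is constant; the
constant is `0` when the mean over the period segment at `Re s = 0` is. -/
lemma eq_zero_of_growth {g : ℂ → ℂ} (hg : Differentiable ℂ g) (hper : ∀ s, g (s + I) = g s)
    (hp : ∀ ε : ℝ, 0 < ε → ∀ᶠ τ : ℝ in atTop, ∀ t : ℝ,
      ‖g (τ + t * I)‖ ≤ ε * Real.exp (2 * Real.pi * τ))
    (hm : ∀ ε : ℝ, 0 < ε → ∀ᶠ τ : ℝ in atBot, ∀ t : ℝ,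
      ‖g (τ + t * I)‖ ≤ ε * Real.exp (-(2 * Real.pi * τ)))
    (h0 : ∫ t in (0:ℝ)..1, g (t * I) = 0) (σ t : ℝ) : g (σ + t * I) = 0 := by
  have hcoef : ∀ k : ℤ, laurentCoeff g k σ = 0 := by
    intro k
    rcases lt_trichotomy k 0 with hk | rfl | hk
    · rw [← norm_le_zero_iff]
      refine le_of_forall_pos_le_add fun ε hε => ?_
      obtain ⟨τ, hτ, hτ0⟩ := ((hm ε hε).and (eventually_le_atBot 0)).exists
      rw [laurentCoeff_eq hg hper k σ τ, zero_add]
      refine norm_laurentCoeff_le fun t => (hτ t).trans ?_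
      have hk' : (k : ℝ) ≤ -1 := by exact_mod_cast (by omega : k ≤ -1)
      gcongr
      nlinarith [mul_nonneg_of_nonpos_of_nonpos hτ0 (by linarith : (k : ℝ) + 1 ≤ 0), Real.pi_pos]
    · rw [laurentCoeff_eq hg hper 0 σ 0]
      simpa [laurentCoeff] using h0
    · rw [← norm_le_zero_iff]
      refine le_of_forall_pos_le_add fun ε hε => ?_
      obtain ⟨τ, hτ, hτ0⟩ := ((hp ε hε).and (eventually_ge_atTop 0)).exists
      rw [laurentCoeff_eq hg hper k σ τ, zero_add]
      refine norm_laurentCoeff_le fun t => (hτ t).trans ?_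
      have hk' : (1 : ℝ) ≤ k := by exact_mod_cast hk
      refine mul_le_mul_of_nonneg_left (Real.exp_le_exp.2 ?_) hε.le
      nlinarith [mul_nonneg hτ0 (by linarith : (0 : ℝ) ≤ k - 1), Real.pi_pos]
  have hgper : Function.Periodic (fun t : ℝ => g (σ + t * I)) 1 := by
    intro t
    simp only
    rw [← hper (σ + t * I)]
    congr 1
    push_cast; ring
  have hcont : Continuous (fun t : ℝ => g (σ + t * I)) := by
    have := hg.continuous
    fun_prop
  let f : C(AddCircle (1:ℝ), ℂ) :=
    ⟨hgper.lift, continuous_coinduced_dom.mpr hcont⟩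
  have hf : ∀ x : ℝ, f (x : AddCircle (1:ℝ)) = g (σ + x * I) := fun x => rfl
  have hfc : fourierCoeff f = 0 := by
    funext k
    rw [fourierCoeff_eq_intervalIntegral f k 0]
    have key : ∀ x : ℝ, fourier (-k) (x : AddCircle (1:ℝ)) • f (x : AddCircle (1:ℝ)) =
        exp (2 * Real.pi * k * σ) *
          (exp (-(2 * (Real.pi : ℂ) * k * (σ + x * I))) * g (σ + x * I)) := by
      intro x
      rw [hf, fourier_coe_apply, smul_eq_mul, ← mul_assoc, ← exp_add]
      congr 2
      push_cast; ring
    simp only [key, intervalIntegral.integral_const_mul]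
    have := hcoef k
    rw [laurentCoeff] at this
    simp [this]
  have hs := has_pointwise_sum_fourier_series_of_summable (f := f)
    (by rw [hfc]; exact summable_zero) (t : AddCircle (1:ℝ))
  rw [hfc, hf] at hs
  simp only [Pi.zero_apply, zero_smul] at hs
  exact hs.unique hasSum_zero


/-- Characterization of the normalized inhomogeneous local model: a C¹ map
`u : ℝ × S¹ → ℂⁿ` solving `∂u/∂τ + i ∂u/∂t = a` with the prescribed asymptotics of
simple weight determined by `A` and `B` and centered at `0` at `τ = 0` must be
`u(τ,t) = e^{2π(τ+it)}A + e^{-2π(τ+it)}B + τa`; in particular it is unique. -/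
theorem stmt_14 (n : ℕ) (hn : 1 ≤ n)
    (A B a : EuclideanSpace ℂ (Fin n)) (hA : A ≠ 0) (hB : B ≠ 0)
    (u : ℝ × ℝ → EuclideanSpace ℂ (Fin n))
    (hreg : ContDiff ℝ 1 u)
    (hper : ∀ τ t : ℝ, u (τ, t + 1) = u (τ, t))
    (hCR : ∀ p : ℝ × ℝ,
      fderiv ℝ u p (1, 0) + Complex.I • fderiv ℝ u p (0, 1) = a)
    (hplus : TendstoUniformly
      (fun τ t => Real.exp (-(2 * Real.pi * τ)) • (u (τ, t) - (τ : ℂ) • a))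
      (fun t => Complex.exp (2 * (Real.pi : ℂ) * (t : ℂ) * Complex.I) • A)
      Filter.atTop)
    (hminus : TendstoUniformly
      (fun τ t => Real.exp (2 * Real.pi * τ) • (u (τ, t) - (τ : ℂ) • a))
      (fun t => Complex.exp (-(2 * (Real.pi : ℂ) * (t : ℂ) * Complex.I)) • B)
      Filter.atBot)
    (hnorm : (∫ t in (0:ℝ)..1, u (0, t)) = 0) :
    ∀ τ t : ℝ, u (τ, t) =
      Complex.exp (2 * (Real.pi : ℂ) * ((τ : ℂ) + (t : ℂ) * Complex.I)) • A +
      Complex.exp (-(2 * (Real.pi : ℂ) * ((τ : ℂ) + (t : ℂ) * Complex.I))) • B +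
      (τ : ℂ) • a := by
  classical
  set v : ℂ → EuclideanSpace ℂ (Fin n) := fun s => u (s.re, s.im) - (s.re : ℂ) • a with hv
  have hvd : Differentiable ℂ v := by
    intro s
    let L : ℂ →L[ℝ] ℝ × ℝ := Complex.reCLM.prod Complex.imCLM
    have h1 : HasFDerivAt (fun s : ℂ => u (s.re, s.im))
        ((fderiv ℝ u (s.re, s.im)).comp L) s :=
      ((hreg.differentiable one_ne_zero) (s.re, s.im)).hasFDerivAt.comp s L.hasFDerivAt
    have h2 : HasFDerivAt (fun s : ℂ => (s.re : ℂ) • a)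
        ((Complex.ofRealCLM.comp Complex.reCLM).smulRight a) s :=
      ((Complex.ofRealCLM.comp Complex.reCLM).smulRight a).hasFDerivAt
    have h3 := h1.sub h2
    refine differentiableAt_complex_iff_differentiableAt_real.2 ⟨h3.differentiableAt, ?_⟩
    have h4 : fderiv ℝ v s = _ := h3.fderiv
    rw [h4]
    have hc := hCR (s.re, s.im)
    simp only [sub_apply, ContinuousLinearMap.comp_apply,
      ContinuousLinearMap.prod_apply, Complex.reCLM_apply, Complex.imCLM_apply,
      Complex.I_re, Complex.I_im, Complex.one_re, Complex.one_im, L,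
      ContinuousLinearMap.smulRight_apply, Complex.ofRealCLM_apply, Complex.ofReal_zero,
      Complex.ofReal_one, zero_smul, one_smul, sub_zero]
    rw [← hc, sub_add_cancel_left, smul_neg, smul_smul, Complex.I_mul_I, neg_one_smul, neg_neg]
  set w : ℂ → EuclideanSpace ℂ (Fin n) := fun s =>
    v s - Complex.exp (2 * (Real.pi : ℂ) * s) • A - Complex.exp (-(2 * (Real.pi : ℂ) * s)) • B
    with hw
  have hwd : Differentiable ℂ w := by fun_prop
  have hexpI : Complex.exp (2 * (Real.pi : ℂ) * Complex.I) = 1 := Complex.exp_two_pi_mul_I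
  have hwper : ∀ s, w (s + Complex.I) = w s := by
    intro s
    have e1 : Complex.exp (2 * (Real.pi : ℂ) * (s + Complex.I)) =
        Complex.exp (2 * (Real.pi : ℂ) * s) := by
      rw [mul_add, Complex.exp_add, hexpI, mul_one]
    simp only [hw, hv, Complex.exp_neg, e1]
    simp [hper]
  -- On each end, one of the two exponential terms cancels the leading part of `v`;
  -- the other one decays.
  have hp : ∀ ε : ℝ, 0 < ε → ∀ᶠ τ : ℝ in Filter.atTop, ∀ t : ℝ,
      ‖w (τ + t * Complex.I)‖ ≤ ε * Real.exp (2 * Real.pi * τ) := by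
    intro ε hε
    have hdec : Filter.Tendsto (fun τ : ℝ => Real.exp (-(4 * Real.pi * τ)) * ‖B‖)
        Filter.atTop (nhds 0) := by
      have : Filter.Tendsto (fun τ : ℝ => 4 * Real.pi * τ) Filter.atTop Filter.atTop :=
        Filter.tendsto_id.const_mul_atTop (by positivity)
      simpa using (Real.tendsto_exp_neg_atTop_nhds_zero.comp this).mul_const ‖B‖
    filter_upwards [Metric.tendstoUniformly_iff.1 hplus (ε / 2) (by positivity),
      hdec.eventually (gt_mem_nhds (by positivity : (0:ℝ) < ε / 2))] with τ h1 h2 t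
    have h1 := h1 t
    rw [dist_eq_norm'] at h1
    have hsplit : w (τ + t * Complex.I) = Real.exp (2 * Real.pi * τ) •
        (Real.exp (-(2 * Real.pi * τ)) • (u (τ, t) - (τ : ℂ) • a)
          - Complex.exp (2 * (Real.pi : ℂ) * (t : ℂ) * Complex.I) • A)
        - Complex.exp (-(2 * (Real.pi : ℂ) * (τ + t * Complex.I))) • B := by
      rw [smul_sub, smul_smul, ← Real.exp_add, add_neg_cancel, Real.exp_zero, one_smul,
        ← Complex.coe_smul (Real.exp _) (Complex.exp _ • A), smul_smul, Complex.ofReal_exp,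
        ← Complex.exp_add]
      simp only [hw, hv]
      have : 2 * (Real.pi : ℂ) * (τ + t * Complex.I) =
        ((2 * Real.pi * τ : ℝ) : ℂ) + 2 * Real.pi * t * Complex.I := by push_cast; ring
      rw [← this]
      simp
    have hB : ‖Complex.exp (-(2 * (Real.pi : ℂ) * (τ + t * Complex.I))) • B‖ =
        Real.exp (2 * Real.pi * τ) * (Real.exp (-(4 * Real.pi * τ)) * ‖B‖) := by
      rw [norm_smul, Complex.norm_exp, ← mul_assoc, ← Real.exp_add]
      congr 2
      simp
      ring
    rw [hsplit]
    refine (norm_sub_le _ _).trans ?_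
    rw [hB, norm_smul, Real.norm_of_nonneg (Real.exp_pos _).le]
    nlinarith [Real.exp_pos (2 * Real.pi * τ)]
  have hm : ∀ ε : ℝ, 0 < ε → ∀ᶠ τ : ℝ in Filter.atBot, ∀ t : ℝ,
      ‖w (τ + t * Complex.I)‖ ≤ ε * Real.exp (-(2 * Real.pi * τ)) := by
    intro ε hε
    have hdec : Filter.Tendsto (fun τ : ℝ => Real.exp (4 * Real.pi * τ) * ‖A‖)
        Filter.atBot (nhds 0) := by
      have : Filter.Tendsto (fun τ : ℝ => 4 * Real.pi * τ) Filter.atBot Filter.atBot :=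
        Filter.tendsto_id.const_mul_atBot (by positivity)
      simpa using (Real.tendsto_exp_atBot.comp this).mul_const ‖A‖
    filter_upwards [Metric.tendstoUniformly_iff.1 hminus (ε / 2) (by positivity),
      hdec.eventually (gt_mem_nhds (by positivity : (0:ℝ) < ε / 2))] with τ h1 h2 t
    have h1 := h1 t
    rw [dist_eq_norm'] at h1
    have hsplit : w (τ + t * Complex.I) = Real.exp (-(2 * Real.pi * τ)) •
        (Real.exp (2 * Real.pi * τ) • (u (τ, t) - (τ : ℂ) • a)
          - Complex.exp (-(2 * (Real.pi : ℂ) * (t : ℂ) * Complex.I)) • B)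
        - Complex.exp (2 * (Real.pi : ℂ) * (τ + t * Complex.I)) • A := by
      rw [smul_sub, smul_smul, ← Real.exp_add, neg_add_cancel, Real.exp_zero, one_smul,
        ← Complex.coe_smul (Real.exp _) (Complex.exp _ • B), smul_smul, Complex.ofReal_exp,
        ← Complex.exp_add]
      simp only [hw, hv]
      have : -(2 * (Real.pi : ℂ) * (τ + t * Complex.I)) =
        ((-(2 * Real.pi * τ) : ℝ) : ℂ) + -(2 * Real.pi * t * Complex.I) := by push_cast; ring
      rw [← this, sub_right_comm]
      simp
    have hA : ‖Complex.exp (2 * (Real.pi : ℂ) * (τ + t * Complex.I)) • A‖ =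
        Real.exp (-(2 * Real.pi * τ)) * (Real.exp (4 * Real.pi * τ) * ‖A‖) := by
      rw [norm_smul, Complex.norm_exp, ← mul_assoc, ← Real.exp_add]
      congr 2
      simp
      ring
    rw [hsplit]
    refine (norm_sub_le _ _).trans ?_
    rw [hA, norm_smul, Real.norm_of_nonneg (Real.exp_pos _).le]
    nlinarith [Real.exp_pos (-(2 * Real.pi * τ))]
  have hmean : ∀ c : ℂ, c ≠ 0 → Complex.exp c = 1 →
      ∫ t in (0:ℝ)..1, Complex.exp (c * t) = 0 := by
    intro c hc hc1
    rw [integral_exp_mul_complex hc]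
    simp [hc1]
  have h2pi : (2 * (Real.pi : ℂ) * Complex.I) ≠ 0 := Complex.two_pi_I_ne_zero
  have h0 : ∫ t in (0:ℝ)..1, w (t * Complex.I) = 0 := by
    have e : ∀ t : ℝ, w (t * Complex.I) = u (0, t)
        - Complex.exp (2 * (Real.pi : ℂ) * Complex.I * t) • A
        - Complex.exp (-(2 * (Real.pi : ℂ) * Complex.I) * t) • B := by
      intro t
      simp only [hw, hv]
      have e1 : 2 * (Real.pi : ℂ) * (t * Complex.I) = 2 * Real.pi * Complex.I * t := by ring
      rw [e1, neg_mul]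
      simp
    have hu : Continuous (fun t : ℝ => u (0, t)) := hreg.continuous.comp (by fun_prop)
    simp only [e]
    rw [intervalIntegral.integral_sub, intervalIntegral.integral_sub,
      intervalIntegral.integral_smul_const, intervalIntegral.integral_smul_const, hnorm,
      hmean _ h2pi hexpI, hmean _ (neg_ne_zero.2 h2pi) (by rw [Complex.exp_neg, hexpI, inv_one])]
    · simp
    all_goals
      apply Continuous.intervalIntegrable
      fun_prop
  intro τ t
  have hw0 : w (τ + t * Complex.I) = 0 := by
    ext j
    let P : EuclideanSpace ℂ (Fin n) →L[ℂ] ℂ := EuclideanSpace.proj j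
    have hbound : ∀ x, ‖P x‖ ≤ ‖x‖ := fun x => PiLp.norm_apply_le x j
    refine eq_zero_of_growth (g := fun s => P (w s)) (by fun_prop) (fun s => by simp only [hwper])
      (fun ε hε => (hp ε hε).mono fun τ h t => (hbound _).trans (h t))
      (fun ε hε => (hm ε hε).mono fun τ h t => (hbound _).trans (h t)) ?_ τ t
    have hwc : Continuous (fun t : ℝ => w (t * Complex.I)) := hwd.continuous.comp (by fun_prop)
    rw [ContinuousLinearMap.intervalIntegral_comp_comm P (hwc.intervalIntegrable _ _), h0, map_zero]
  simp only [hw, hv] at hw0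
  have hre : ((τ : ℂ) + t * Complex.I).re = τ := by simp
  have him : ((τ : ℂ) + t * Complex.I).im = t := by simp
  rw [hre, him, sub_sub, sub_sub, sub_eq_zero] at hw0
  rw [hw0]
  abel
end
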